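/- arXiv:2312.03622 — 2 statements merged into one kernel-verified Lean document; each statement's English description precedes it below -/
import Mathlib

section
/- Let A ⊆ B be an inclusion of C*-algebras (A a closed *-subalgebra of B). Suppose there exist a C*-algebra C with real rank zero, *-homomorphisms ψ : A → C and φ : C → B, and a net (u_λ) of unitary elements of the multiplier algebra M(B) of B such that u_λ · φ(ψ(a)) · u_λ* → a in norm for every a ∈ A. Then the inclusion A ⊆ B has real rank zero. -/
open Filter Topology MultiplierAlgebra

section Defs

variable {B : Type*} [NonUnitalNormedRing B] [StarRing B] [PartialOrder B]

/-- A projection in a C*-algebra: a self-adjoint idempotent. -/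
def IsProjection (p : B) : Prop := star p = p ∧ p * p = p

/-- The hereditary subalgebra `cl(a·S·a)`: the norm closure of `{a * b * a : b ∈ S}`. -/
def herSub (S : Set B) (a : B) : Set B := closure {x : B | ∃ b ∈ S, x = a * b * a}

/-- `T` has an approximate unit of projections. -/
def HasApproxUnitOfProjections (T : Set B) : Prop :=
  ∀ x ∈ T, 0 ≤ x → ∀ ε : ℝ, 0 < ε → ∃ p ∈ T, IsProjection p ∧ ‖p * x - x‖ < ε

/-- The inclusion `A ⊆ S` of C*-algebras has real rank zero. -/
def InclusionRealRankZero (A S : Set B) : Prop :=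
  ∀ a ∈ A, 0 ≤ a → a ≠ 0 → HasApproxUnitOfProjections (herSub S a)

end Defs

/-- A C*-algebra `C` has real rank zero: every self-adjoint element of `C` is a norm limit
of self-adjoint elements of `C` having finite spectrum. -/
def AlgRealRankZero (C : Type*) [NonUnitalCStarAlgebra C] : Prop :=
  ∀ a : C, IsSelfAdjoint a → ∀ ε : ℝ, 0 < ε →
    ∃ b : C, IsSelfAdjoint b ∧ (spectrum ℂ (b : Unitization ℂ C)).Finite ∧ ‖a - b‖ ≤ ε

lemma finite_real_quasispectrum {C : Type*} [NonUnitalCStarAlgebra C] {b : C}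
    (hb : (spectrum ℂ (b : Unitization ℂ C)).Finite) : (quasispectrum ℝ b).Finite := by
  rw [← quasispectrum.preimage_algebraMap ℂ, Unitization.quasispectrum_eq_spectrum_inr]
  exact hb.preimage (FaithfulSMul.algebraMap_injective ℝ ℂ).injOn

/-- The spectral projection of a self-adjoint element with finite spectrum away from
`(-ε, ε)`. -/
lemma exists_projection_of_finite_quasispectrum {C : Type*} [NonUnitalCStarAlgebra C] {b : C}
    (hb : IsSelfAdjoint b) (hfin : (quasispectrum ℝ b).Finite) {ε : ℝ} (hε : 0 < ε) :
    ∃ k : C, IsSelfAdjoint k ∧ ‖k‖ ≤ (ε ^ 2)⁻¹ ∧ IsProjection (b * k * b) ∧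
      ‖b * k * b * b - b‖ ≤ ε := by
  let f : ℝ → ℝ := fun t => if ε ≤ |t| then (t ^ 2)⁻¹ else 0
  have hcont (g : ℝ → ℝ) : ContinuousOn g (quasispectrum ℝ b) := hfin.continuousOn g
  have hf0 : f 0 = 0 := by simp [f]
  have hmul (g h : ℝ → ℝ) (hg : g 0 = 0) (hh : h 0 = 0) :
      cfcₙ g b * cfcₙ h b = cfcₙ (fun t => g t * h t) b :=
    (cfcₙ_mul g h b (hcont _) hg (hcont _) hh).symm
  have hid : cfcₙ (fun t : ℝ => t) b = b := cfcₙ_id' ℝ b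
  have hq : b * cfcₙ f b * b = cfcₙ (fun t => t * f t * t) b := by
    rw [← hmul _ _ (by simp) rfl, ← hmul _ _ rfl hf0, hid]
  have hsq (t : ℝ) : t * f t * t = if ε ≤ |t| then 1 else 0 := by
    by_cases h : ε ≤ |t|
    · have : t ≠ 0 := abs_pos.mp (hε.trans_le h)
      simp only [f, h, if_true]
      field_simp
    · simp [f, h]
  refine ⟨cfcₙ f b, cfcₙ_predicate f b, norm_cfcₙ_le fun t _ => ?_, ⟨?_, ?_⟩, ?_⟩
  · by_cases h : ε ≤ |t|
    · simp only [f, h, if_true]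
      rw [Real.norm_of_nonneg (by positivity), ← sq_abs t]
      gcongr
    · simp only [f, h, if_false, norm_zero]
      positivity
  · rw [hq]
    exact cfcₙ_predicate (R := ℝ) _ b
  · rw [hq, hmul _ _ (by simp) (by simp)]
    congr 1
    ext t
    rw [hsq]
    split_ifs <;> simp
  · have : b * cfcₙ f b * b * b - b = cfcₙ (fun t => t * f t * t * t - t) b := by
      rw [cfcₙ_sub _ _ b (hcont _) (by simp) (hcont _) rfl,
        ← hmul (fun t => t * f t * t) _ (by simp) rfl, ← hq, hid]
    rw [this]
    refine norm_cfcₙ_le fun t _ => ?_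
    rw [hsq]
    split_ifs with h
    · simpa using hε.le
    · simpa using (not_le.mp h).le

/-- A self-adjoint element that is almost idempotent is close to a projection in its
hereditary subalgebra. -/
lemma exists_projection_near_of_almost_idempotent {B : Type*} [NonUnitalCStarAlgebra B] {h : B}
    (hh : IsSelfAdjoint h) {τ : ℝ} (hτ : τ < 1 / 4) (hidem : ‖h * h - h‖ ≤ τ) :
    ∃ g : B, IsProjection (h * g * h) ∧ ‖h * g * h - h‖ ≤ 2 * τ := by
  let f : ℝ → ℝ := fun t => if 1 / 2 < t then (t ^ 2)⁻¹ else 0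
  have hid : cfcₙ (fun t : ℝ => t) h = h := cfcₙ_id' ℝ h
  have hspec (t : ℝ) (ht : t ∈ quasispectrum ℝ h) : |t * t - t| ≤ τ := by
    have heq : h * h - h = cfcₙ (fun t : ℝ => t * t - t) h := by
      rw [cfcₙ_sub _ _ h (by fun_prop) (by simp) (by fun_prop) rfl,
        cfcₙ_mul _ _ h (by fun_prop) rfl (by fun_prop) rfl, hid]
    have := norm_apply_le_norm_cfcₙ (fun t : ℝ => t * t - t) h ht
    rw [← heq] at this
    exact this.trans hidem
  have hne (t : ℝ) (ht : t ∈ quasispectrum ℝ h) : t ≠ 1 / 2 := by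
    rintro rfl
    have := hspec _ ht
    norm_num [abs_of_neg] at this
    linarith
  have hf : ContinuousOn f (quasispectrum ℝ h) := by
    intro t ht
    refine ContinuousAt.continuousWithinAt ?_
    rcases lt_or_gt_of_ne (hne t ht) with hlt | hgt
    · refine continuousAt_const (y := (0 : ℝ)) |>.congr ?_
      filter_upwards [eventually_lt_nhds hlt] with s hs
      simp only [f, not_lt.mpr hs.le, if_false]
    · have h0 : t ^ 2 ≠ 0 := by positivity
      have : ContinuousAt (fun s : ℝ => (s ^ 2)⁻¹) t := by fun_prop (disch := assumption)
      refine this.congr ?_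
      filter_upwards [eventually_gt_nhds hgt] with s hs
      simp only [f, hs, if_true]
  have hf0 : f 0 = 0 := by simp [f]
  have hprod : ContinuousOn (fun t => t * f t * t) (quasispectrum ℝ h) := by fun_prop
  have hq : h * cfcₙ f h * h = cfcₙ (fun t => t * f t * t) h := by
    rw [cfcₙ_mul _ _ h (by fun_prop) (by simp) (by fun_prop) rfl,
      cfcₙ_mul _ _ h (by fun_prop) (by simp) (by fun_prop) hf0, hid]
  have hsq (t : ℝ) : t * f t * t = if 1 / 2 < t then 1 else 0 := by
    by_cases h : 1 / 2 < t
    · have : t ≠ 0 := by positivity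
      simp only [f, h, if_true]
      field_simp
    · simp only [f, h, if_false]
      simp
  refine ⟨cfcₙ f h, ⟨?_, ?_⟩, ?_⟩
  · rw [hq]
    exact cfcₙ_predicate (R := ℝ) _ h
  · rw [hq, ← cfcₙ_mul _ _ h hprod (by simp) hprod (by simp)]
    congr 1
    ext t
    rw [hsq]
    split_ifs <;> simp
  · have : h * cfcₙ f h * h - h = cfcₙ (fun t => t * f t * t - t) h := by
      rw [cfcₙ_sub _ _ h hprod (by simp) (by fun_prop) rfl, hid, hq]
    rw [this]
    refine norm_cfcₙ_le fun t ht => ?_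
    have hts := hspec t ht
    rw [show t * t - t = t * (t - 1) by ring, abs_mul] at hts
    rw [hsq, Real.norm_eq_abs]
    split_ifs with h
    · rw [abs_sub_comm]
      rw [abs_of_pos (by linarith : (0 : ℝ) < t)] at hts
      nlinarith [abs_nonneg (t - 1)]
    · rw [zero_sub, abs_neg]
      rw [abs_of_neg (by linarith : t - 1 < 0)] at hts
      nlinarith [abs_nonneg t]

lemma IsProjection.norm_le_one {B : Type*} [NonUnitalCStarAlgebra B] {q : B}
    (hq : IsProjection q) : ‖q‖ ≤ 1 := by
  have h := CStarRing.norm_star_mul_self (x := q)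
  rw [hq.1, hq.2] at h
  by_contra! hlt
  nlinarith

lemma exists_projection_near {B : Type*} [NonUnitalCStarAlgebra B] {a k q : B}
    (ha : IsSelfAdjoint a) (hk : IsSelfAdjoint k) (hq : IsProjection q) {σ : ℝ}
    (hσ : σ < 1 / 16) (hdist : ‖a * k * a - q‖ ≤ σ) :
    ∃ d : B, IsProjection (a * d * a) ∧ ‖a * d * a - q‖ ≤ 9 * σ := by
  set h := a * k * a with hh
  have hsa : IsSelfAdjoint h := by
    simp only [IsSelfAdjoint, hh, star_mul, ha.star_eq, hk.star_eq, mul_assoc]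
  have hσ0 : 0 ≤ σ := (norm_nonneg _).trans hdist
  have hq1 := hq.norm_le_one
  have hnorm : ‖h‖ ≤ 1 + σ := by
    linarith [norm_sub_norm_le h q]
  have hidem : ‖h * h - h‖ ≤ 4 * σ := by
    have heq : h * h - h = h * (h - q) + (h - q) * q - (h - q) := by
      rw [mul_sub, sub_mul, hq.2]
      abel
    have h1 := norm_mul_le h (h - q)
    have h2 := norm_mul_le (h - q) q
    have h3 := norm_sub_le (h * (h - q) + (h - q) * q) (h - q)
    have h4 := norm_add_le (h * (h - q)) ((h - q) * q)
    rw [heq]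
    nlinarith [norm_nonneg h, norm_nonneg q, norm_nonneg (h - q)]
  obtain ⟨g, hg, hgh⟩ := exists_projection_near_of_almost_idempotent hsa (by linarith) hidem
  refine ⟨k * a * g * a * k, ?_⟩
  have heq : a * (k * a * g * a * k) * a = h * g * h := by simp only [hh, mul_assoc]
  rw [heq]
  exact ⟨hg, by linarith [norm_sub_le_norm_sub_add_norm_sub (h * g * h) h q]⟩

namespace DoubleCentralizer

variable {B : Type*} [NonUnitalCStarAlgebra B]

lemma coe_injective : Function.Injective (fun b : B => (b : 𝓜(ℂ, B))) := by
  intro x y hxy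
  have h : (x - y) * star (x - y) = 0 := by
    have := congrArg (fun m : 𝓜(ℂ, B) => m.fst (star (x - y))) hxy
    simpa [sub_mul, sub_eq_zero] using this
  exact sub_eq_zero.mp (CStarRing.mul_star_self_eq_zero_iff _ |>.mp h)

lemma norm_coe (b : B) : ‖(b : 𝓜(ℂ, B))‖ = ‖b‖ :=
  NonUnitalStarAlgHom.norm_map (coeHom (𝕜 := ℂ) (A := B)) coe_injective b

lemma mul_fst_apply (m : 𝓜(ℂ, B)) (x y : B) : m.fst (x * y) = m.fst x * y := by
  have h (z : B) : z * (m.fst (x * y) - m.fst x * y) = 0 := by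
    rw [mul_sub, ← m.central, ← mul_assoc z, ← m.central, mul_assoc, sub_self]
  exact sub_eq_zero.mp (CStarRing.star_mul_self_eq_zero_iff _ |>.mp (h _))

lemma snd_mul_apply (m : 𝓜(ℂ, B)) (x y : B) : m.snd (x * y) = x * m.snd y := by
  have h (z : B) : (m.snd (x * y) - x * m.snd y) * z = 0 := by
    rw [sub_mul, m.central, mul_assoc x (m.snd y), m.central, mul_assoc, sub_self]
  exact sub_eq_zero.mp (CStarRing.mul_star_self_eq_zero_iff _ |>.mp (h _))

lemma mul_coe (m : 𝓜(ℂ, B)) (x : B) : m * (x : 𝓜(ℂ, B)) = (m.fst x : B) := by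
  apply DoubleCentralizer.ext
  apply Prod.ext <;> ext y
  · exact mul_fst_apply m x y
  · exact m.central y x

lemma coe_mul (m : 𝓜(ℂ, B)) (x : B) : (x : 𝓜(ℂ, B)) * m = (m.snd x : B) := by
  apply DoubleCentralizer.ext
  apply Prod.ext <;> ext y
  · exact (m.central x y).symm
  · exact snd_mul_apply m y x

/-- Conjugation by a unitary multiplier is a star homomorphism of the algebra. -/
lemma exists_conj_hom {v : 𝓜(ℂ, B)} (hv : v ∈ unitary 𝓜(ℂ, B)) :
    ∃ θ : B →⋆ₙₐ[ℂ] B, ∀ x, (θ x : 𝓜(ℂ, B)) = v * (x : 𝓜(ℂ, B)) * star v := by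
  let j := coeHom (𝕜 := ℂ) (A := B)
  have hj : Function.Injective j := coe_injective
  have hex (x : B) : ∃ y : B, j y = v * j x * star v :=
    ⟨(star v).snd (v.fst x), ((congrArg (· * star v) (mul_coe v x)).trans (coe_mul _ _)).symm⟩
  choose θ hθ using hex
  exact ⟨{ toFun := θ
           map_smul' := fun r x => hj (by simp [hθ])
           map_zero' := hj (by simp [hθ])
           map_add' := fun x y => hj (by simp [hθ, mul_add, add_mul])
           map_mul' := fun x y => hj (by
             have : star v * v = 1 := hv.1
             rw [map_mul, hθ, hθ, hθ, map_mul]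
             calc v * (j x * j y) * star v = v * j x * 1 * j y * star v := by
                    simp only [mul_assoc, one_mul]
               _ = _ := by rw [← this]; simp only [mul_assoc])
           map_star' := fun x => hj (by simp [hθ, map_star, mul_assoc]) }, hθ⟩

end DoubleCentralizer

/-- If `a` is a point-norm limit of images of a self-adjoint element of an algebra of real rank
zero, then some projection in `a * B * a` almost acts as a unit on `a`. -/
lemma exists_projection_mul_sub_norm_lt {B C : Type*} [NonUnitalCStarAlgebra B]
    [NonUnitalCStarAlgebra C] (hC : AlgRealRankZero C) {a : B} (ha : IsSelfAdjoint a) {c : C}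
    (hc : IsSelfAdjoint c) (happrox : ∀ η : ℝ, 0 < η → ∃ θ : C →⋆ₙₐ[ℂ] B, ‖θ c - a‖ < η)
    {δ : ℝ} (hδ : 0 < δ) :
    ∃ d : B, IsProjection (a * d * a) ∧ ‖a * d * a * a - a‖ < δ := by
  set M := ‖a‖ with hM
  set ε := δ / 4 with hεdef
  have hε : 0 < ε := by positivity
  set K := (ε ^ 2)⁻¹ with hK
  have hK0 : 0 ≤ K := by positivity
  let σ : ℝ → ℝ := fun η => 2 * η * K * M + (M + 2 * η) * K * (2 * η)
  obtain ⟨η, hη, hσ1, hσ2⟩ :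
      ∃ η : ℝ, 0 < η ∧ σ η < 1 / 16 ∧ 9 * σ η * M + 4 * η < δ / 2 := by
    have h1 : ∀ᶠ η in 𝓝[>] (0 : ℝ), σ η < 1 / 16 :=
      nhdsWithin_le_nhds <| ContinuousAt.eventually_lt (f := σ) (by fun_prop)
        continuousAt_const (by simp [σ])
    have h2 : ∀ᶠ η in 𝓝[>] (0 : ℝ), 9 * σ η * M + 4 * η < δ / 2 :=
      nhdsWithin_le_nhds <| ContinuousAt.eventually_lt (f := fun η => 9 * σ η * M + 4 * η)
        (by fun_prop) continuousAt_const (by simp [σ, hδ])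
    obtain ⟨η, hη, h⟩ := (eventually_mem_nhdsWithin.and (h1.and h2)).exists
    exact ⟨η, hη, h⟩
  obtain ⟨b, hb, hfin, hcb⟩ := hC c hc η hη
  obtain ⟨k, hk, hkK, hq, hqb⟩ := exists_projection_of_finite_quasispectrum hb
    (finite_real_quasispectrum hfin) hε
  obtain ⟨θ, hθ⟩ := happrox η hη
  have hba : ‖θ b - a‖ ≤ 2 * η := by
    have h1 : ‖θ b - θ c‖ ≤ η := by
      rw [← map_sub, ← norm_neg, ← map_neg, neg_sub]
      exact (NonUnitalStarAlgHom.norm_apply_le θ _).trans hcb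
    linarith [norm_sub_le_norm_sub_add_norm_sub (θ b) (θ c) a]
  have hk' : ‖θ k‖ ≤ K := (NonUnitalStarAlgHom.norm_apply_le θ _).trans hkK
  have hq' : IsProjection (θ (b * k * b)) :=
    ⟨by rw [← map_star, hq.1], by rw [← map_mul, hq.2]⟩
  have hqb' : ‖θ (b * k * b) * θ b - θ b‖ ≤ ε := by
    rw [← map_mul, ← map_sub]
    exact (NonUnitalStarAlgHom.norm_apply_le θ _).trans hqb
  have hb' : ‖θ b‖ ≤ M + 2 * η := by linarith [norm_sub_norm_le (θ b) a]
  have hdist : ‖a * θ k * a - θ (b * k * b)‖ ≤ σ η := by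
    have heq : a * θ k * a - θ (b * k * b) =
        (a - θ b) * θ k * a + θ b * θ k * (a - θ b) := by
      simp only [map_mul]
      noncomm_ring
    rw [norm_sub_rev] at hba
    rw [heq]
    calc _ ≤ ‖(a - θ b) * θ k * a‖ + ‖θ b * θ k * (a - θ b)‖ := norm_add_le _ _
      _ ≤ ‖a - θ b‖ * ‖θ k‖ * ‖a‖ + ‖θ b‖ * ‖θ k‖ * ‖a - θ b‖ :=
        add_le_add (norm_mul₃_le) (norm_mul₃_le)
      _ ≤ _ := by
        simp only [σ]
        gcongr
  obtain ⟨d, hd, hdq⟩ := exists_projection_near ha (hk.map θ) hq' hσ1 hdist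
  refine ⟨d, hd, ?_⟩
  set q := θ (b * k * b)
  set p := a * d * a
  have heq : p * a - a = (p - q) * a + q * (a - θ b) + (q * θ b - θ b) + (θ b - a) := by
    noncomm_ring
  have h1 : ‖(p - q) * a‖ ≤ 9 * σ η * M := (norm_mul_le _ _).trans (by gcongr)
  have h2 : ‖q * (a - θ b)‖ ≤ 1 * (2 * η) := by
    refine (norm_mul_le _ _).trans ?_
    rw [norm_sub_rev]
    gcongr
    exact hq'.norm_le_one
  rw [heq]
  linarith [norm_add₄_le (a := (p - q) * a) (b := q * (a - θ b)) (c := q * θ b - θ b)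
    (d := θ b - a)]

lemma hasApproxUnitOfProjections_herSub {B : Type*} [NonUnitalCStarAlgebra B] [PartialOrder B]
    {a : B} (h : ∀ δ : ℝ, 0 < δ →
      ∃ d : B, IsProjection (a * d * a) ∧ ‖a * d * a * a - a‖ < δ) :
    HasApproxUnitOfProjections (herSub Set.univ a) := by
  intro x hx _ ε hε
  obtain ⟨_, ⟨b, -, rfl⟩, hxb⟩ := Metric.mem_closure_iff.mp hx (ε / 4) (by positivity)
  rw [dist_eq_norm] at hxb
  obtain ⟨d, hd, hda⟩ := h (ε / 4 / (‖b * a‖ + 1)) (by positivity)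
  refine ⟨a * d * a, subset_closure ⟨d, Set.mem_univ _, rfl⟩, hd, ?_⟩
  set p := a * d * a
  have heq : p * x - x = p * (x - a * b * a) + (p * a - a) * (b * a) - (x - a * b * a) := by
    noncomm_ring
  have h1 : ‖p * (x - a * b * a)‖ ≤ 1 * (ε / 4) :=
    (norm_mul_le _ _).trans (by gcongr; exact hd.norm_le_one)
  have h2 : ‖(p * a - a) * (b * a)‖ ≤ ε / 4 := by
    refine (norm_mul_le _ _).trans ?_
    rw [lt_div_iff₀ (by positivity)] at hda
    nlinarith [norm_nonneg (p * a - a), norm_nonneg (b * a)]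
  rw [heq]
  linarith [norm_sub_le (p * (x - a * b * a) + (p * a - a) * (b * a)) (x - a * b * a),
    norm_add_le (p * (x - a * b * a)) ((p * a - a) * (b * a))]

theorem stmt10 {B : Type*} [NonUnitalCStarAlgebra B] [PartialOrder B] [StarOrderedRing B]
    (A : NonUnitalStarSubalgebra ℂ B) (hA : IsClosed (A : Set B))
    {C : Type*} [NonUnitalCStarAlgebra C] (hC : AlgRealRankZero C)
    (ψ : A →⋆ₙₐ[ℂ] C) (φ : C →⋆ₙₐ[ℂ] B)
    {ι : Type*} (l : Filter ι) [l.NeBot]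
    (u : ι → 𝓜(ℂ, B)) (hu : ∀ i, u i ∈ unitary 𝓜(ℂ, B))
    (hconv : ∀ a : A, Tendsto (fun i => u i * (φ (ψ a) : 𝓜(ℂ, B)) * star (u i)) l
      (nhds ((a : B) : 𝓜(ℂ, B)))) :
    InclusionRealRankZero (A : Set B) (Set.univ : Set B) := by
  intro a haA ha0 _
  have ha : IsSelfAdjoint a := .of_nonneg ha0
  have ha' : IsSelfAdjoint (⟨a, haA⟩ : A) := Subtype.ext ha.star_eq
  refine hasApproxUnitOfProjections_herSub fun δ hδ =>
    exists_projection_mul_sub_norm_lt hC ha (ha'.map ψ) (fun η hη => ?_) hδ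
  obtain ⟨i, hi⟩ := ((hconv ⟨a, haA⟩).eventually (Metric.ball_mem_nhds _ hη)).exists
  obtain ⟨θ, hθ⟩ := DoubleCentralizer.exists_conj_hom (hu i)
  refine ⟨θ.comp φ, ?_⟩
  rw [dist_eq_norm, ← hθ] at hi
  rw [← DoubleCentralizer.norm_coe]
  exact (congrArg norm (map_sub (DoubleCentralizer.coeHom (𝕜 := ℂ) (A := B)) _ _)).trans_lt hi
end

section
/- Let A ⊆ B be an inclusion of C*-algebras such that every nonzero positive element of A is full and properly infinite in B. Then the inclusion A ⊆ B has real rank zero. Moreover, for every nonzero positive a ∈ A, the hereditary C*-subalgebra cl(aBa) has an increasing approximate unit consisting of projections which are full and properly infinite in B: there is a sequence of projections (p_n) in cl(aBa) with p_n ≤ p_{n+1} (equivalently p_n·p_{n+1} = p_n) for all n, each p_n full and properly infinite in B, such that ‖p_n·x − x‖ → 0 for every x ∈ cl(aBa). -/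
open Filter Topology

section Infinite

variable {B : Type*} [NonUnitalCStarAlgebra B] [PartialOrder B] [StarOrderedRing B]

/-- An element `b` of a C*-algebra `B` is full if the closed two-sided ideal of `B`
generated by `b` is all of `B`. -/
def IsFullIn (b : B) : Prop :=
  ∀ J : TwoSidedIdeal B, IsClosed (J : Set B) → b ∈ J → ∀ x : B, x ∈ J

/-- Cuntz subequivalence: `a ≾ b` if `a = lim xₙ * b * xₙ*`. -/
def CuntzSubequiv {R : Type*} [NonUnitalRing R] [StarRing R] [TopologicalSpace R]
    (a b : R) : Prop :=
  ∃ x : ℕ → R, Tendsto (fun n => x n * b * star (x n)) atTop (nhds a)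

/-- A nonzero positive element `b` of a C*-algebra is properly infinite if
`diag(b, b) ≾ diag(b, 0)` in `M₂(B)`. -/
def ProperlyInfinite (b : B) : Prop :=
  b ≠ 0 ∧ 0 ≤ b ∧
    CuntzSubequiv (R := Matrix (Fin 2) (Fin 2) B)
      (Matrix.diagonal ![b, b]) (Matrix.diagonal ![b, 0])

end Infinite

section Helpers

variable {B : Type*} [NonUnitalCStarAlgebra B]

lemma IsProjection.norm_le_one_s18 {p : B} (hp : IsProjection p) : ‖p‖ ≤ 1 := by
  have h := CStarRing.norm_star_mul_self (x := p)
  rw [hp.1, hp.2] at h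
  nlinarith [norm_nonneg p]

/-- A self-adjoint element of norm less than one has a self-adjoint quasi-inverse. -/
lemma exists_quasiInverse {m : B} (hm : IsSelfAdjoint m) (hn : ‖m‖ < 1) :
    ∃ k : B, IsSelfAdjoint k ∧ k + m + m * k = 0 ∧ k + m + k * m = 0 := by
  have hpos : ∀ x ∈ quasispectrum ℝ m, 1 + x ≠ 0 := by
    intro x hx h0
    have h1 := NonUnitalIsometricContinuousFunctionalCalculus.norm_quasispectrum_le m hx hm
    rw [Real.norm_eq_abs] at h1
    have h2 := neg_abs_le x
    linarith
  have hc : ContinuousOn (fun x : ℝ => (1 + x)⁻¹ - 1) (quasispectrum ℝ m) := by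
    refine ContinuousOn.sub (ContinuousOn.inv₀ (by fun_prop) hpos) (by fun_prop)
  have hc' : ContinuousOn (fun x : ℝ => x * ((1 + x)⁻¹ - 1)) (quasispectrum ℝ m) :=
    continuousOn_id.mul hc
  have h0 : (fun x : ℝ => (1 + x)⁻¹ - 1) 0 = 0 := by norm_num
  have h0' : (fun x : ℝ => x * ((1 + x)⁻¹ - 1)) 0 = 0 := by norm_num
  have hmul : cfcₙ (fun x : ℝ => x * ((1 + x)⁻¹ - 1)) m
      = m * cfcₙ (fun x : ℝ => (1 + x)⁻¹ - 1) m := by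
    rw [cfcₙ_mul (fun x : ℝ => x) (fun x : ℝ => (1 + x)⁻¹ - 1) m (by fun_prop) (by simp) hc h0,
      cfcₙ_id' ℝ m]
  have hcomm : m * cfcₙ (fun x : ℝ => (1 + x)⁻¹ - 1) m
      = cfcₙ (fun x : ℝ => (1 + x)⁻¹ - 1) m * m := by
    have := cfcₙ_commute_cfcₙ (fun x : ℝ => x) (fun x : ℝ => (1 + x)⁻¹ - 1) m
    rw [cfcₙ_id' ℝ m] at this
    exact this
  have key : cfcₙ (fun x : ℝ => (1 + x)⁻¹ - 1) m + m
      + m * cfcₙ (fun x : ℝ => (1 + x)⁻¹ - 1) m = 0 := by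
    rw [← hmul]
    nth_rewrite 2 [← cfcₙ_id' ℝ m]
    rw [← cfcₙ_add (fun x : ℝ => (1 + x)⁻¹ - 1) (fun x : ℝ => x) m hc h0 (by fun_prop) (by simp),
      ← cfcₙ_add (fun x : ℝ => (1 + x)⁻¹ - 1 + x) (fun x : ℝ => x * ((1 + x)⁻¹ - 1)) m
        (hc.add continuousOn_id) (by simp) hc' h0', ← cfcₙ_const_zero ℝ m]
    refine cfcₙ_congr fun x hx => ?_
    have := hpos x hx
    field_simp
    ring
  exact ⟨_, cfcₙ_predicate _ m, key, hcomm ▸ key⟩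

/-- The complement of the range projection of the isometry `(1 + n) (1 + k) ^ (1 / 2)`. -/
lemma isProjection_of_quasiInverse {n m k : B} (hk : IsSelfAdjoint k)
    (hm : n + star n + star n * n = m) (hkm : k + m + k * m = 0) :
    IsProjection (-(n + star n + n * star n + k + n * k + k * star n + n * k * star n)) := by
  constructor
  · simp only [star_neg, star_add, star_mul, star_star, hk.star_eq, mul_assoc]
    abel
  · have inj : Function.Injective (fun x : B => (x : Unitization ℂ B)) :=
      Unitization.inr_injective
    apply inj
    have hP : ((-(n + star n + n * star n + k + n * k + k * star n + n * k * star n) : B) :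
        Unitization ℂ B) = 1 - (1 + (n : Unitization ℂ B)) * (1 + (k : Unitization ℂ B)) *
          (1 + ((star n : B) : Unitization ℂ B)) := by
      simp only [Unitization.inr_neg, Unitization.inr_add, Unitization.inr_mul]
      noncomm_ring
    have hK : (1 + (k : Unitization ℂ B)) * ((1 + ((star n : B) : Unitization ℂ B)) *
        (1 + (n : Unitization ℂ B))) = 1 := by
      have h1 : (1 + ((star n : B) : Unitization ℂ B)) * (1 + (n : Unitization ℂ B))
          = 1 + (m : Unitization ℂ B) := by
        rw [← hm]
        simp only [Unitization.inr_add, Unitization.inr_mul]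
        noncomm_ring
      have h2 : (k : Unitization ℂ B) + m + k * m = 0 := by
        rw [← Unitization.inr_mul, ← Unitization.inr_add, ← Unitization.inr_add, hkm,
          Unitization.inr_zero]
      rw [h1]
      calc _ = 1 + ((k : Unitization ℂ B) + m + k * m) := by noncomm_ring
        _ = 1 := by rw [h2, add_zero]
    simp only [Unitization.inr_mul, hP]
    generalize (1 + (k : Unitization ℂ B)) = K at *
    generalize (1 + (n : Unitization ℂ B)) = V at *
    generalize (1 + ((star n : B) : Unitization ℂ B)) = W at *
    calc _ = 1 - V * K * W - V * K * W + V * (K * (W * V)) * K * W := by noncomm_ring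
      _ = _ := by rw [hK]; noncomm_ring

variable [PartialOrder B]

lemma ProperlyInfinite.exists_seq {b : B} (hb : ProperlyInfinite b) :
    ∃ y z : ℕ → B, Tendsto (fun n => y n * b * star (y n)) atTop (𝓝 b) ∧
      Tendsto (fun n => z n * b * star (z n)) atTop (𝓝 b) ∧
      Tendsto (fun n => y n * b * star (z n)) atTop (𝓝 0) ∧
      Tendsto (fun n => z n * b * star (y n)) atTop (𝓝 0) := by
  obtain ⟨-, -, x, hx⟩ := hb
  have hij : ∀ i j, Tendsto (fun n => x n i 0 * b * star (x n j 0)) atTop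
      (𝓝 ((Matrix.diagonal ![b, b] : Matrix (Fin 2) (Fin 2) B) i j)) := by
    intro i j
    have := (tendsto_pi_nhds.1 ((tendsto_pi_nhds.1 hx) i)) j
    refine this.congr fun n => ?_
    simp [Matrix.mul_apply, Fin.sum_univ_two, Matrix.star_apply, Matrix.diagonal]
  refine ⟨fun n => x n 0 0, fun n => x n 1 0, ?_, ?_, ?_, ?_⟩
  · simpa using hij 0 0
  · simpa using hij 1 1
  · simpa using hij 0 1
  · simpa using hij 1 0

/-- Approximately orthogonal copies of `b` in itself witness proper infiniteness. -/
lemma ProperlyInfinite.of_approx {b : B} (hb : b ≠ 0) (hb0 : 0 ≤ b)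
    (h : ∀ ε : ℝ, 0 < ε → ∃ y z : B, ‖y * b * star y - b‖ < ε ∧ ‖z * b * star z - b‖ < ε ∧
      ‖y * b * star z‖ < ε ∧ ‖z * b * star y‖ < ε) : ProperlyInfinite b := by
  refine ⟨hb, hb0, ?_⟩
  choose y z h1 h2 h3 h4 using fun n : ℕ => h (1 / (n + 1)) Nat.one_div_pos_of_nat
  refine ⟨fun n => !![y n, 0; z n, 0], ?_⟩
  have lim : ∀ (f : ℕ → B) (c : B), (∀ n : ℕ, ‖f n - c‖ < 1 / ((n : ℝ) + 1)) →
      Tendsto f atTop (𝓝 c) := fun f c hf => by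
    rw [tendsto_iff_norm_sub_tendsto_zero]
    exact squeeze_zero (fun _ => norm_nonneg _) (fun n => (hf n).le)
      tendsto_one_div_add_atTop_nhds_zero_nat
  refine tendsto_pi_nhds.2 fun i => tendsto_pi_nhds.2 fun j => ?_
  have hz : ∀ x : B, ‖x‖ = ‖x - 0‖ := fun x => by rw [sub_zero]
  fin_cases i <;> fin_cases j <;>
    simp [Matrix.mul_apply, Fin.sum_univ_two, Matrix.star_apply, Matrix.diagonal]
  · exact lim _ _ h1
  · exact lim _ _ fun n => hz _ ▸ h3 n
  · exact lim _ _ fun n => hz _ ▸ h4 n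
  · exact lim _ _ h2

/-- If `b` is full and properly infinite, the elements `u * b * w` are dense. -/
lemma IsFullIn.mem_closure_mul_mul {b : B} (hf : IsFullIn b) (hb : ProperlyInfinite b) (x : B) :
    x ∈ closure {x : B | ∃ u w : B, x = u * b * w} := by
  obtain ⟨y, z, hy, hz, hyz, hzy⟩ := hb.exists_seq
  set S : Set B := {x : B | ∃ u w : B, x = u * b * w} with hS
  have hadd : ∀ {x y : B}, x ∈ closure S → y ∈ closure S → x + y ∈ closure S := by
    intro x x' hx hx'
    rw [← closure_closure (s := S)]
    refine map_mem_closure₂ continuous_add hx hx' ?_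
    rintro _ ⟨u, w, rfl⟩ _ ⟨u', w', rfl⟩
    have hlim : Tendsto (fun n => u * (y n * b * star (y n)) * w + u * (y n * b * star (z n)) * w'
        + u' * (z n * b * star (y n)) * w + u' * (z n * b * star (z n)) * w') atTop
        (𝓝 (u * b * w + u * 0 * w' + u' * 0 * w + u' * b * w')) :=
      ((((hy.const_mul u).mul_const w).add ((hyz.const_mul u).mul_const w')).add
        ((hzy.const_mul u').mul_const w)).add ((hz.const_mul u').mul_const w')
    have heq : u * b * w + u * 0 * w' + u' * 0 * w + u' * b * w' = u * b * w + u' * b * w' := by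
      simp
    rw [heq] at hlim
    refine mem_closure_of_tendsto hlim (Eventually.of_forall fun n => ?_)
    exact ⟨u * y n + u' * z n, star (y n) * w + star (z n) * w', by noncomm_ring⟩
  let J : TwoSidedIdeal B := TwoSidedIdeal.mk' (closure S)
    (subset_closure ⟨0, 0, by simp⟩) hadd
    (fun hx => map_mem_closure continuous_neg hx (by
      rintro _ ⟨u, w, rfl⟩; exact ⟨-u, w, by simp⟩))
    (fun {v _} hx => map_mem_closure (continuous_const_mul v) hx (by
      rintro _ ⟨u, w, rfl⟩; exact ⟨v * u, w, by simp only [mul_assoc]⟩))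
    (fun {x v} hx => map_mem_closure (f := fun x => x * v) (continuous_mul_const v) hx (by
      rintro _ ⟨u, w, rfl⟩; exact ⟨u, w * v, by simp only [mul_assoc]⟩))
  have hJ : ∀ x, x ∈ J ↔ x ∈ closure S := fun x => TwoSidedIdeal.mem_mk' ..
  rw [← hJ]
  refine hf J ?_ ?_ x
  · have : (J : Set B) = closure S := Set.ext hJ
    rw [this]
    exact isClosed_closure
  · rw [hJ]
    exact mem_closure_of_tendsto hy (Eventually.of_forall fun n => ⟨_, _, rfl⟩)

variable [StarOrderedRing B]

/-- Every element `s * star s` is a limit of elements `y * star y` with `y * e = y`, provided that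
`e` is a unit for some full and properly infinite element. -/
lemma IsFullIn.mem_closure_mul_star {b e : B} (hf : IsFullIn b) (hb : ProperlyInfinite b)
    (he : IsSelfAdjoint e) (heb : e * b = b) (s : B) :
    s * star s ∈ closure {x : B | ∃ y : B, y * e = y ∧ x = y * star y} := by
  have hbs : IsSelfAdjoint b := .of_nonneg hb.2.1
  refine map_mem_closure (f := fun x : B => x * star x) (by fun_prop)
    (hf.mem_closure_mul_mul hb s) ?_
  rintro _ ⟨u, w, rfl⟩
  set P := b * w * star (b * w) with hP
  have hP0 : 0 ≤ P := mul_star_self_nonneg _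
  set N := CFC.sqrt P with hN
  have hNs : star N = N := (IsSelfAdjoint.of_nonneg (CFC.sqrt_nonneg P)).star_eq
  have hNN : N * N = P := CFC.sqrt_mul_sqrt_self P hP0
  have heP : e * P = P := by rw [hP, ← mul_assoc, ← mul_assoc, heb]
  have heN : e * N = N := by
    have : (e * N - N) * star (e * N - N) = 0 := by
      have h1 : star (e * N - N) = N * e - N := by rw [star_sub, star_mul, hNs, he.star_eq]
      calc _ = e * (N * N) * e - e * (N * N) - (N * N * e - N * N) := by rw [h1]; noncomm_ring
        _ = 0 := by rw [hNN, heP]; abel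
    rw [CStarRing.mul_star_self_eq_zero_iff] at this
    exact sub_eq_zero.1 this
  have hNe : N * e = N := by simpa [hNs, he.star_eq] using congr(star $heN)
  refine ⟨u * N, by rw [mul_assoc, hNe], ?_⟩
  calc _ = u * P * star u := by rw [hP]; simp only [star_mul, mul_assoc]
    _ = _ := by rw [← hNN, star_mul, hNs]; simp only [mul_assoc]

/-- A projection dominating a unit of a full and properly infinite element is full and properly
infinite. -/
lemma IsProjection.isFullIn_and_properlyInfinite {p e b : B} (hp : IsProjection p)
    (he : IsSelfAdjoint e) (hpe : p * e = e) (hb : IsFullIn b) (hbi : ProperlyInfinite b)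
    (heb : e * b = b) (hei : ProperlyInfinite (e * e)) :
    IsFullIn p ∧ ProperlyInfinite p := by
  have hpb : p * b = b := by rw [← heb, ← mul_assoc, hpe]
  have hep : e * p = e := by simpa [he.star_eq, hp.1] using congr(star $hpe)
  refine ⟨fun J hJ hpJ x => hb J hJ (hpb ▸ J.mul_mem_right _ _ hpJ) x, ?_⟩
  have hp0 : p ≠ 0 := fun h => hbi.1 (by rw [← hpb, h, zero_mul])
  have hpn : 0 ≤ p := by
    have := mul_star_self_nonneg p
    rwa [hp.1, hp.2] at this
  obtain ⟨y, z, hy, hz, hyz, hzy⟩ := hei.exists_seq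
  refine .of_approx hp0 hpn fun ε hε => ?_
  have hcl := hb.mem_closure_mul_star hbi he heb p
  rw [hp.1, hp.2] at hcl
  obtain ⟨_, ⟨V, hVe, rfl⟩, hV⟩ := Metric.mem_closure_iff.1 hcl (ε / 2) (half_pos hε)
  rw [dist_comm, dist_eq_norm] at hV
  have hVV : V * (e * e) * star V = V * star V := by rw [← mul_assoc V, hVe, hVe]
  have key : ∀ (r s : ℕ → B) (l : B),
      Tendsto (fun n => r n * (e * e) * star (s n)) atTop (𝓝 l) → ∀ᶠ n in atTop,
      ‖V * r n * e * p * star (V * s n * e) - V * l * star V‖ < ε / 2 := by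
    intro r s l h
    have h1 := (h.const_mul V).mul_const (star V)
    have h2 := (tendsto_iff_norm_sub_tendsto_zero.1 h1).eventually_lt_const (half_pos hε)
    filter_upwards [h2] with n hn
    have h3 : V * r n * e * p * star (V * s n * e)
        = V * (r n * (e * e) * star (s n)) * star V := by
      rw [mul_assoc _ e p, hep]
      simp only [star_mul, he.star_eq, mul_assoc]
    rwa [h3]
  have diag : ∀ x : B, ‖x - V * (e * e) * star V‖ < ε / 2 → ‖x - p‖ < ε := by
    intro x hx
    rw [hVV] at hx
    calc ‖x - p‖ = ‖(x - V * star V) + (V * star V - p)‖ := by congr 1; abel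
      _ ≤ _ := norm_add_le _ _
      _ < ε := by linarith
  have offd : ∀ x : B, ‖x - V * 0 * star V‖ < ε / 2 → ‖x‖ < ε := by
    intro x hx
    simp only [mul_zero, zero_mul, sub_zero] at hx
    linarith
  obtain ⟨n, h1, h2, h3, h4⟩ := ((key y y _ hy).and ((key z z _ hz).and
    ((key y z _ hyz).and (key z y _ hzy)))).exists
  exact ⟨V * y n * e, V * z n * e, diag _ h1, diag _ h2, offd _ h3, offd _ h4⟩

/-- If `g` is orthogonal to `e` and a unit for a full and properly infinite element, then there is
a projection that is a unit for `e` and lies under any unit `u` of a suitable `t ≥ e, g`. -/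
lemma exists_projection {b e g t u : B} (hf : IsFullIn b) (hb : ProperlyInfinite b)
    (he : IsSelfAdjoint e) (hg : IsSelfAdjoint g) (ht : IsSelfAdjoint t) (hu : IsSelfAdjoint u)
    (hgb : g * b = b) (heg : e * g = 0) (htg : t * g = g) (het : e * t = e) (hut : u * t = t)
    (ht1 : ‖t‖ ≤ 1) (hbd : ‖t * (t * t) * t + t * t - (t + t)‖ ≤ 7 / 8) :
    ∃ p : B, IsProjection p ∧ p * e = e ∧ u * p = p := by
  obtain ⟨_, ⟨Y, hYg, rfl⟩, hY⟩ := Metric.mem_closure_iff.1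
    (hf.mem_closure_mul_star hb hg hgb t) (1 / 8) (by norm_num)
  rw [dist_comm, dist_eq_norm, ht.star_eq] at hY
  have hgY : g * star Y = star Y := by simpa [hg.star_eq] using congr(star $hYg)
  have htY : t * star Y = star Y := by rw [← hgY, ← mul_assoc, htg]
  have hYt : Y * t = Y := by simpa [ht.star_eq] using congr(star $htY)
  have heY : e * star Y = 0 := by rw [← hgY, ← mul_assoc, heg, zero_mul]
  have huY : u * star Y = star Y := by rw [← htY, ← mul_assoc, hut]
  set n := star Y * t - t with hn
  have hsn : star n = t * Y - t := by rw [hn]; simp [ht.star_eq]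
  set m := t * (Y * star Y) * t + t * t - (t + t) with hm
  have hnm : n + star n + star n * n = m := by
    calc _ = (star Y * t - t) + (t * Y - t) + (t * (Y * star Y) * t - t * (Y * t)
          - (t * star Y) * t + t * t) := by rw [hsn, hn]; noncomm_ring
      _ = m := by rw [hYt, htY, hm]; abel
  have hms : IsSelfAdjoint m := by
    rw [← hnm]
    exact (IsSelfAdjoint.add_star_self n).add (IsSelfAdjoint.star_mul_self n)
  have hm1 : ‖m‖ < 1 := by
    have h1 : m = t * (Y * star Y - t * t) * t + (t * (t * t) * t + t * t - (t + t)) := by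
      rw [hm]; noncomm_ring
    have h2 : ‖t * (Y * star Y - t * t) * t‖ ≤ ‖Y * star Y - t * t‖ := by
      calc _ ≤ ‖t‖ * ‖Y * star Y - t * t‖ * ‖t‖ :=
            (norm_mul_le _ _).trans (by gcongr; exact norm_mul_le _ _)
        _ ≤ 1 * ‖Y * star Y - t * t‖ * 1 := by gcongr
        _ = _ := by ring
    rw [h1]
    refine (norm_add_le _ _).trans_lt ?_
    linarith
  obtain ⟨k, hk, hmk, hkm⟩ := exists_quasiInverse hms hm1
  refine ⟨_, isProjection_of_quasiInverse hk hnm hkm, ?_, ?_⟩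
  · have hen : e * n = -e := by rw [hn, mul_sub, ← mul_assoc, heY, zero_mul, het, zero_sub]
    have hne : star n * e = -e := by simpa [he.star_eq] using congr(star $hen)
    calc _ = -(n * e + star n * e + n * (star n * e) + k * e + n * k * e + k * (star n * e)
          + n * k * (star n * e)) := by noncomm_ring
      _ = e := by rw [hne]; noncomm_ring
  · have hun : u * n = n := by rw [hn, mul_sub, ← mul_assoc, huY, hut]
    have htu : t * u = t := by simpa [ht.star_eq, hu.star_eq] using congr(star $hut)
    have hnu : n * u = n := by rw [hn, sub_mul, mul_assoc, htu]
    have hun' : u * star n = star n := by simpa [hu.star_eq] using congr(star $hnu)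
    have hum : u * m = m := by
      calc u * m = u * n + u * star n + (u * star n) * n := by rw [← hnm]; noncomm_ring
        _ = m := by rw [hun, hun', hnm]
    have hkeq : k = -(m + m * k) := by
      rw [eq_neg_iff_add_eq_zero, ← add_assoc]; exact hmk
    have huk : u * k = k := by
      rw [hkeq, mul_neg, mul_add, ← mul_assoc, hum]
    calc _ = -(u * n + u * star n + u * n * star n + u * k + u * n * k + u * k * star n
          + u * n * k * star n) := by noncomm_ring
      _ = _ := by rw [hun, hun', huk]

end Helpers

section Ramp

/-- The piecewise linear function that is `0` below `α` and `1` above `β`. -/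
noncomputable def ramp (α β x : ℝ) : ℝ := max 0 (min 1 ((x - α) / (β - α)))

variable {α β x : ℝ}

lemma continuous_ramp (α β : ℝ) : Continuous (ramp α β) := by
  unfold ramp
  fun_prop

lemma ramp_of_le (h : α < β) (hx : x ≤ α) : ramp α β x = 0 := by
  refine max_eq_left ((min_le_right _ _).trans ?_)
  exact div_nonpos_of_nonpos_of_nonneg (by linarith) (by linarith)

lemma ramp_of_ge (h : α < β) (hx : β ≤ x) : ramp α β x = 1 := by
  have : 1 ≤ (x - α) / (β - α) := by rw [le_div_iff₀ (by linarith)]; linarith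
  simp [ramp, min_eq_left this]

lemma ramp_nonneg : 0 ≤ ramp α β x := le_max_left _ _

lemma ramp_le_one : ramp α β x ≤ 1 := max_le zero_le_one (min_le_left _ _)

lemma ramp_zero (hα : 0 < α) (h : α < β) : ramp α β 0 = 0 := ramp_of_le h hα.le

end Ramp

section Calculus

variable {B : Type*} [NonUnitalCStarAlgebra B]

lemma cfcₙ_mul_cfcₙ_eq {a : B} {f g k : ℝ → ℝ} (hf : Continuous f)
    (hf0 : f 0 = 0) (hg : Continuous g) (hg0 : g 0 = 0) (h : ∀ x, f x * g x = k x) :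
    cfcₙ f a * cfcₙ g a = cfcₙ k a := by
  rw [← cfcₙ_mul f g a hf.continuousOn hf0 hg.continuousOn hg0]
  exact cfcₙ_congr fun x _ => h x

lemma cfcₙ_ne_zero {a : B} (ha : IsSelfAdjoint a) {f : ℝ → ℝ} (hf : Continuous f) (hf0 : f 0 = 0)
    {l : ℝ} (hl : l ∈ quasispectrum ℝ a) (hfl : f l ≠ 0) : cfcₙ f a ≠ 0 := by
  intro h
  rw [← cfcₙ_zero ℝ a] at h
  exact hfl (eqOn_of_cfcₙ_eq_cfcₙ h ha hf.continuousOn hf0 (by fun_prop) rfl hl)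

lemma exists_cfcₙ_ramp_eq_mul {a : B} (ha : IsSelfAdjoint a) {α β : ℝ} (hα : 0 < α) (h : α < β) :
    ∃ k : B, cfcₙ (ramp α β) a = a * k ∧ cfcₙ (ramp α β) a = k * a := by
  have hc : Continuous fun x => ramp α β x / max x α :=
    (continuous_ramp α β).div (by fun_prop) fun x => (lt_max_of_lt_right hα).ne'
  have h0 : (fun x => ramp α β x / max x α) 0 = 0 := by simp [ramp_zero hα h]
  have hx : ∀ x, x * (ramp α β x / max x α) = ramp α β x := by
    intro x
    rcases le_or_gt x α with hx | hx
    · simp [ramp_of_le h hx]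
    · rw [max_eq_left hx.le]
      have : x ≠ 0 := (hα.trans hx).ne'
      field_simp
  refine ⟨cfcₙ (fun x => ramp α β x / max x α) a, ?_, ?_⟩
  · nth_rewrite 2 [← cfcₙ_id' ℝ a]
    exact (cfcₙ_mul_cfcₙ_eq continuous_id' rfl hc h0 hx).symm
  · nth_rewrite 3 [← cfcₙ_id' ℝ a]
    exact (cfcₙ_mul_cfcₙ_eq hc h0 continuous_id' rfl fun x => (mul_comm _ _).trans (hx x)).symm

lemma IsProjection.mem_herSub {a p e : B} (hp : IsProjection p) (he : IsSelfAdjoint e)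
    (hep : e * p = p) (h : ∃ k : B, e = a * k ∧ e = k * a) :
    p ∈ herSub (Set.univ : Set B) a := by
  obtain ⟨k, h1, h2⟩ := h
  have hpe : p * e = p := by simpa [he.star_eq, hp.1] using congr(star $hep)
  refine subset_closure ⟨k * p * k, trivial, ?_⟩
  calc p = e * p * e := by rw [hep, hpe]
    _ = (a * k) * p * (k * a) := by rw [← h1, ← h2]
    _ = _ := by simp only [mul_assoc]

lemma tendsto_mul_of_mem_herSub {a : B} {p : ℕ → B} (hp : ∀ n, IsProjection (p n))
    (h : Tendsto (fun n => p n * a) atTop (𝓝 a)) {x : B} (hx : x ∈ herSub (Set.univ : Set B) a) :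
    Tendsto (fun n => ‖p n * x - x‖) atTop (𝓝 0) := by
  rw [Metric.tendsto_atTop]
  intro ε hε
  obtain ⟨_, ⟨b, -, rfl⟩, hy⟩ := Metric.mem_closure_iff.1 hx (ε / 3) (by positivity)
  rw [dist_eq_norm] at hy
  have h1 : Tendsto (fun n => p n * a * (b * a)) atTop (𝓝 (a * (b * a))) := h.mul_const _
  obtain ⟨N, hN⟩ := Metric.tendsto_atTop.1 h1 (ε / 3) (by positivity)
  refine ⟨N, fun n hn => ?_⟩
  have h2 := hN n hn
  rw [dist_eq_norm] at h2
  rw [Real.dist_eq, sub_zero, abs_norm]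
  have h3 : ‖p n * (x - a * b * a)‖ ≤ ‖x - a * b * a‖ :=
    (norm_mul_le _ _).trans (mul_le_of_le_one_left (norm_nonneg _) (hp n).norm_le_one_s18)
  calc ‖p n * x - x‖ = ‖p n * (x - a * b * a) + (p n * a * (b * a) - a * (b * a))
        - (x - a * b * a)‖ := by congr 1; noncomm_ring
    _ ≤ ‖p n * (x - a * b * a)‖ + ‖p n * a * (b * a) - a * (b * a)‖ + ‖x - a * b * a‖ :=
        (norm_sub_le _ _).trans (by gcongr; exact norm_add_le _ _)
    _ < ε := by linarith

variable [PartialOrder B] [StarOrderedRing B]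

lemma norm_cfcₙ_ramp_mul_sub_le {a : B} (ha : 0 ≤ a) {d : ℝ} (hd : 0 < d) :
    ‖cfcₙ (ramp d (2 * d)) a * a - a‖ ≤ 2 * d := by
  have has : IsSelfAdjoint a := .of_nonneg ha
  have hd2 : d < 2 * d := by linarith
  have hc := continuous_ramp d (2 * d)
  have h0 := ramp_zero hd hd2
  have : cfcₙ (ramp d (2 * d)) a * a - a = cfcₙ (fun x => ramp d (2 * d) x * x - x) a := by
    rw [cfcₙ_sub (fun x => ramp d (2 * d) x * x) (fun x => x) a (by fun_prop) (by simp)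
      (by fun_prop) rfl, cfcₙ_mul (ramp d (2 * d)) (fun x => x) a (by fun_prop) h0
      (by fun_prop) rfl, cfcₙ_id' ℝ a]
  rw [this]
  refine norm_cfcₙ_le fun x hx => ?_
  have hx0 : 0 ≤ x := quasispectrum_nonneg_of_nonneg a ha x hx
  rcases le_total (2 * d) x with h | h
  · rw [ramp_of_ge hd2 h]
    simpa using hd.le
  · have h1 := ramp_nonneg (α := d) (β := 2 * d) (x := x)
    have h2 := ramp_le_one (α := d) (β := 2 * d) (x := x)
    rw [Real.norm_eq_abs, abs_le]
    constructor <;> nlinarith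

/-- If `a` has spectrum in `(0, d)` and above `2 * d`, there is a full and properly infinite
projection between two cut-offs of `a`. -/
lemma exists_projection_between {A : NonUnitalStarSubalgebra ℂ B} (hAc : IsClosed (A : Set B))
    (h : ∀ a ∈ A, 0 ≤ a → a ≠ 0 → IsFullIn a ∧ ProperlyInfinite a) {a : B} (haA : a ∈ A)
    (ha : 0 ≤ a) {d l m : ℝ} (hl : l ∈ quasispectrum ℝ a) (hl0 : 0 < l) (hld : l < d)
    (hm : m ∈ quasispectrum ℝ a) (hdm : 2 * d < m) :
    ∃ p : B, IsProjection p ∧ p * cfcₙ (ramp d (2 * d)) a = cfcₙ (ramp d (2 * d)) a ∧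
      cfcₙ (ramp (l / 16) (2 * (l / 16))) a * p = p ∧ IsFullIn p ∧ ProperlyInfinite p := by
  have has : IsSelfAdjoint a := .of_nonneg ha
  have hmem : ∀ f : ℝ → ℝ, cfcₙ f a ∈ A := fun f => cfcₙ_mem (hs := hAc) f haA
  have hsa : ∀ f : ℝ → ℝ, IsSelfAdjoint (cfcₙ f a) := fun f => cfcₙ_predicate f a
  have hd : 0 < d := hl0.trans hld
  have hd2 : d < 2 * d := by linarith
  obtain ⟨l', hl', hlt⟩ := exists_between hld
  have c := continuous_ramp
  set e := ramp d (2 * d) with he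
  set t := ramp (l / 8) (l / 4) with ht
  set u := ramp (l / 16) (2 * (l / 16)) with hu
  set g : ℝ → ℝ := fun x => ramp (l / 4) (l / 2) x * (1 - ramp l' d x) with hg
  set b : ℝ → ℝ := fun x => max 0 (min (x - l / 2) (l' - x)) with hb
  have ce : Continuous e := c _ _
  have ct : Continuous t := c _ _
  have cu : Continuous u := c _ _
  have cg : Continuous g := (c _ _).mul (continuous_const.sub (c _ _))
  have cb : Continuous b := by rw [hb]; fun_prop
  have e0 : e 0 = 0 := ramp_zero hd hd2
  have t0 : t 0 = 0 := ramp_zero (by linarith) (by linarith)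
  have u0 : u 0 = 0 := ramp_zero (by linarith) (by linarith)
  have g0 : g 0 = 0 := by
    simp only [hg]
    rw [ramp_zero (by linarith) (by linarith), zero_mul]
  have b0 : b 0 = 0 := max_eq_left ((min_le_left _ _).trans (by linarith))
  have t1 : ∀ x, l / 4 ≤ x → t x = 1 := fun x hx => ramp_of_ge (by linarith) hx
  have hbn : cfcₙ b a ≠ 0 := by
    refine cfcₙ_ne_zero has cb b0 hl (ne_of_gt ?_)
    exact lt_max_of_lt_right (lt_min (by linarith) (by linarith))
  obtain ⟨hbf, hbi⟩ := h _ (hmem b) (cfcₙ_nonneg fun x _ => le_max_left _ _) hbn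
  obtain ⟨p, hp, hpe, hup⟩ := exists_projection (e := cfcₙ e a) (g := cfcₙ g a) (t := cfcₙ t a)
    (u := cfcₙ u a) hbf hbi (hsa e) (hsa g) (hsa t) (hsa u)
    (cfcₙ_mul_cfcₙ_eq cg g0 cb b0 fun x => by
      rcases le_or_gt (b x) 0 with hx | hx
      · rw [le_antisymm hx (le_max_left _ _), mul_zero]
      · simp only [hb, lt_max_iff, lt_self_iff_false, false_or, lt_min_iff] at hx
        simp only [hg]
        rw [ramp_of_ge (by linarith) (by linarith), ramp_of_le hlt (by linarith)]
        ring)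
    ((cfcₙ_mul_cfcₙ_eq ce e0 cg g0 (k := 0) fun x => by
      simp only [hg, he, Pi.zero_apply]
      rcases le_total x d with hx | hx
      · rw [ramp_of_le hd2 hx, zero_mul]
      · rw [ramp_of_ge hlt hx, sub_self, mul_zero, mul_zero]).trans (cfcₙ_zero ℝ a))
    (cfcₙ_mul_cfcₙ_eq ct t0 cg g0 fun x => by
      rcases le_total x (l / 4) with hx | hx
      · simp only [hg]
        rw [ramp_of_le (by linarith) hx, zero_mul, mul_zero]
      · rw [t1 x hx, one_mul])
    (cfcₙ_mul_cfcₙ_eq ce e0 ct t0 fun x => by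
      rcases le_total x d with hx | hx
      · rw [he, ramp_of_le hd2 hx, zero_mul]
      · rw [t1 x (by linarith), mul_one])
    (cfcₙ_mul_cfcₙ_eq cu u0 ct t0 fun x => by
      rcases le_total x (l / 8) with hx | hx
      · rw [ht, ramp_of_le (by linarith) hx, mul_zero]
      · rw [hu, ramp_of_ge (by linarith) (by linarith), one_mul])
    (norm_cfcₙ_le fun x _ => by
      rw [Real.norm_eq_abs, abs_of_nonneg ramp_nonneg]
      exact ramp_le_one)
    (by
      rw [← cfcₙ_mul t t a ct.continuousOn t0 ct.continuousOn t0,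
        ← cfcₙ_add t t a ct.continuousOn t0 ct.continuousOn t0,
        ← cfcₙ_mul t (fun x => t x * t x) a ct.continuousOn t0 (by fun_prop) (by simp [t0]),
        ← cfcₙ_mul (fun x => t x * (t x * t x)) t a (by fun_prop) (by simp [t0])
          ct.continuousOn t0,
        ← cfcₙ_add (fun x => t x * (t x * t x) * t x) (fun x => t x * t x) a (by fun_prop)
          (by simp [t0]) (by fun_prop) (by simp [t0]),
        ← cfcₙ_sub (fun x => t x * (t x * t x) * t x + t x * t x) (fun x => t x + t x) a
          (by fun_prop) (by simp [t0]) (by fun_prop) (by simp [t0])]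
      refine norm_cfcₙ_le fun x _ => ?_
      have h1 : 0 ≤ t x := ramp_nonneg
      have h2 : t x ≤ 1 := ramp_le_one
      generalize t x = s at h1 h2
      have h3 : s * s ≤ s := by nlinarith
      rw [Real.norm_eq_abs, abs_le]
      constructor
      · nlinarith [sq_nonneg (s * s - 7 / 20), sq_nonneg (s - 10 / 17)]
      · nlinarith [mul_nonneg h1 h1])
  have hs0 : ramp (2 * d) m 0 = 0 := ramp_zero (by linarith) hdm
  obtain ⟨hcf, hci⟩ := h _ (hmem (ramp (2 * d) m)) (cfcₙ_nonneg fun x _ => ramp_nonneg)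
    (cfcₙ_ne_zero has (c _ _) hs0 hm (by rw [ramp_of_ge hdm le_rfl]; exact one_ne_zero))
  have heb : cfcₙ e a * cfcₙ (ramp (2 * d) m) a = cfcₙ (ramp (2 * d) m) a :=
    cfcₙ_mul_cfcₙ_eq ce e0 (c _ _) hs0 fun x => by
      rcases le_total x (2 * d) with hx | hx
      · rw [ramp_of_le hdm hx, mul_zero]
      · rw [he, ramp_of_ge hd2 hx, one_mul]
  have hee : cfcₙ e a * cfcₙ e a ≠ 0 := fun h0 => hci.1 (by
    rw [← heb]
    nth_rewrite 1 [← heb]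
    rw [← mul_assoc, h0, zero_mul])
  have hee0 : 0 ≤ cfcₙ e a * cfcₙ e a := by
    simpa [(hsa e).star_eq] using star_mul_self_nonneg (cfcₙ e a)
  obtain ⟨-, hei⟩ := h _ (A.mul_mem (hmem e) (hmem e)) hee0 hee
  obtain ⟨hpf, hpi⟩ := hp.isFullIn_and_properlyInfinite (hsa e) hpe hcf hci heb hei
  exact ⟨p, hp, hpe, hup, hpf, hpi⟩

/-- The increasing approximate unit of full and properly infinite projections. -/
lemma exists_increasing_projections {A : NonUnitalStarSubalgebra ℂ B}
    (hAc : IsClosed (A : Set B))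
    (h : ∀ a ∈ A, 0 ≤ a → a ≠ 0 → IsFullIn a ∧ ProperlyInfinite a) {a : B} (haA : a ∈ A)
    (ha : 0 ≤ a) (ha0 : a ≠ 0) :
    ∃ p : ℕ → B,
      (∀ n, p n ∈ herSub (Set.univ : Set B) a) ∧
      (∀ n, IsProjection (p n)) ∧
      (∀ n, p n * p (n + 1) = p n) ∧
      (∀ n, IsFullIn (p n) ∧ ProperlyInfinite (p n)) ∧
      Tendsto (fun n => p n * a) atTop (𝓝 a) := by
  have has : IsSelfAdjoint a := .of_nonneg ha
  have hmem : ∀ f : ℝ → ℝ, cfcₙ f a ∈ A := fun f => cfcₙ_mem (hs := hAc) f haA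
  have hsa : ∀ f : ℝ → ℝ, IsSelfAdjoint (cfcₙ f a) := fun f => cfcₙ_predicate f a
  by_cases hacc : ∀ d : ℝ, 0 < d → ∃ l ∈ quasispectrum ℝ a, 0 < l ∧ l < d
  · obtain ⟨m, hm, hm0, -⟩ := hacc 1 one_pos
    have step : ∀ d : {d : ℝ // 0 < d ∧ 2 * d < m}, ∃ d' : {d : ℝ // 0 < d ∧ 2 * d < m},
        (d' : ℝ) ≤ d / 2 ∧ ∃ p : B, IsProjection p ∧
        p * cfcₙ (ramp d (2 * d)) a = cfcₙ (ramp d (2 * d)) a ∧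
        cfcₙ (ramp d' (2 * d')) a * p = p ∧ IsFullIn p ∧ ProperlyInfinite p := by
      rintro ⟨d, hd, hdm⟩
      obtain ⟨l, hl, hl0, hld⟩ := hacc d hd
      obtain ⟨p, hp⟩ := exists_projection_between hAc h haA ha hl hl0 hld hm hdm
      refine ⟨⟨l / 16, by linarith, by linarith⟩, ?_, p, hp⟩
      simp only
      linarith
    choose next hnext q hq hqe heq hqf using step
    let d : ℕ → {d : ℝ // 0 < d ∧ 2 * d < m} :=
      fun n => next^[n] ⟨m / 4, by linarith, by linarith⟩
    have hds : ∀ n, d (n + 1) = next (d n) := fun n => Function.iterate_succ_apply' ..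
    have hdle : ∀ n, (d n : ℝ) ≤ m / 4 * (1 / 2) ^ n := by
      intro n
      induction n with
      | zero => simp [d]
      | succ n ih =>
        rw [hds, pow_succ]
        linarith [hnext (d n)]
    have hd0 : Tendsto (fun n => 4 * (d n : ℝ)) atTop (𝓝 0) := by
      have h1 : Tendsto (fun n : ℕ => 4 * (m / 4 * (1 / 2 : ℝ) ^ n)) atTop
          (𝓝 (4 * (m / 4 * 0))) :=
        ((tendsto_pow_atTop_nhds_zero_of_lt_one (by norm_num) (by norm_num)).const_mul
          _).const_mul _
      simp only [mul_zero] at h1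
      exact squeeze_zero (fun n => by linarith [(d n).2.1]) (fun n => by linarith [hdle n]) h1
    refine ⟨fun n => q (d n), fun n => ?_, fun n => hq _, fun n => ?_, fun n => hqf _, ?_⟩
    · refine (hq (d n)).mem_herSub (hsa _) (heq (d n)) ?_
      have := (next (d n)).2.1
      exact exists_cfcₙ_ramp_eq_mul has this (by linarith)
    · have h1 : q (d (n + 1)) * q (d n) = q (d n) := by
        have h2 := heq (d n)
        rw [← hds n] at h2
        rw [← h2, ← mul_assoc, hqe]
      simpa [(hq (d n)).1, (hq (d (n + 1))).1] using congr(star $h1)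
    · rw [tendsto_iff_norm_sub_tendsto_zero]
      refine squeeze_zero (fun _ => norm_nonneg _) (fun n => ?_) hd0
      set E := cfcₙ (ramp (d n) (2 * d n)) a with hE
      have h1 : ‖E * a - a‖ ≤ 2 * d n := norm_cfcₙ_ramp_mul_sub_le ha (d n).2.1
      have h2 : q (d n) * a - a = (E * a - a) - q (d n) * (E * a - a) := by
        have := hqe (d n)
        rw [← hE] at this
        rw [mul_sub, ← mul_assoc, this]
        abel
      have h3 : ‖q (d n) * (E * a - a)‖ ≤ ‖E * a - a‖ :=
        (norm_mul_le _ _).trans (mul_le_of_le_one_left (norm_nonneg _) (hq (d n)).norm_le_one_s18)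
      rw [h2]
      refine (norm_sub_le _ _).trans ?_
      linarith
  · push Not at hacc
    obtain ⟨d, hd, hgap⟩ := hacc
    have hd2 : d / 2 < d := by linarith
    have hval : ∀ x ∈ quasispectrum ℝ a, x = 0 ∨ ramp (d / 2) d x = 1 := fun x hx => by
      rcases (quasispectrum_nonneg_of_nonneg a ha x hx).eq_or_lt with h0 | h0
      · exact .inl h0.symm
      · exact .inr (ramp_of_ge hd2 (hgap x hx h0))
    have c := (continuous_ramp (d / 2) d).continuousOn (s := quasispectrum ℝ a)
    have r0 : ramp (d / 2) d 0 = 0 := ramp_zero (by linarith) hd2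
    set q := cfcₙ (ramp (d / 2) d) a with hq
    have hqp : IsProjection q := by
      refine ⟨(hsa _).star_eq, ?_⟩
      rw [hq, ← cfcₙ_mul _ _ a c r0 c r0]
      refine cfcₙ_congr fun x hx => ?_
      rcases hval x hx with rfl | h1
      · simp [r0]
      · simp [h1]
    have hqa : q * a = a := by
      nth_rewrite 1 2 [← cfcₙ_id' ℝ a]
      rw [hq, ← cfcₙ_mul _ _ a c r0 (by fun_prop) rfl]
      refine cfcₙ_congr fun x hx => ?_
      rcases hval x hx with rfl | h1
      · simp
      · simp [h1]
    have hq0 : q ≠ 0 := fun h0 => ha0 (by rw [← hqa, h0, zero_mul])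
    refine ⟨fun _ => q, fun _ => ?_, fun _ => hqp, fun _ => hqp.2, fun _ => ?_, ?_⟩
    · exact hqp.mem_herSub (hsa _) hqp.2 (exists_cfcₙ_ramp_eq_mul has (by linarith) hd2)
    · exact h q (hmem _) (cfcₙ_nonneg fun x _ => ramp_nonneg) hq0
    · simp only [hqa]
      exact tendsto_const_nhds

end Calculus

theorem stmt18 {B : Type*} [NonUnitalCStarAlgebra B] [PartialOrder B] [StarOrderedRing B]
    (A : NonUnitalStarSubalgebra ℂ B) (hAc : IsClosed (A : Set B))
    (h : ∀ a ∈ A, 0 ≤ a → a ≠ 0 → IsFullIn a ∧ ProperlyInfinite a) :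
    InclusionRealRankZero (A : Set B) (Set.univ : Set B) ∧
      ∀ a ∈ A, 0 ≤ a → a ≠ 0 →
        ∃ p : ℕ → B,
          (∀ n, p n ∈ herSub (Set.univ : Set B) a) ∧
          (∀ n, IsProjection (p n)) ∧
          (∀ n, p n * p (n + 1) = p n) ∧
          (∀ n, IsFullIn (p n) ∧ ProperlyInfinite (p n)) ∧
          (∀ x ∈ herSub (Set.univ : Set B) a,
            Tendsto (fun n => ‖p n * x - x‖) atTop (nhds 0)) := by
  have key := fun a haA ha ha0 => exists_increasing_projections hAc h (a := a) haA ha ha0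
  refine ⟨fun a haA ha ha0 x hx _ ε hε => ?_, fun a haA ha ha0 => ?_⟩
  · obtain ⟨p, hp, hproj, -, -, hlim⟩ := key a haA ha ha0
    obtain ⟨n, hn⟩ :=
      ((tendsto_mul_of_mem_herSub hproj hlim hx).eventually_lt_const hε).exists
    exact ⟨p n, hp n, hproj n, hn⟩
  · obtain ⟨p, hp, hproj, hmono, hfull, hlim⟩ := key a haA ha ha0
    exact ⟨p, hp, hproj, hmono, hfull, fun x hx => tendsto_mul_of_mem_herSub hproj hlim hx⟩
end
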